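/- Let m be a real number with m ≥ 1 and let ℓ = a + bi be a complex number with b > 0, such that |ℓ| ≥ m, |m + ℓ| ≥ |ℓ|, and |m − ℓ| ≥ |ℓ|, and such that b·m ≥ 3.35. Then for all integers p and q, if |p| > 7 or |q| > 3, then |p·m + q·ℓ| > 6. -/

import Mathlib

/-!
Let `u`, `v` be a reduced basis of a plane lattice and `w = p u + q v`. Reducedness says that
`v` projects onto the line of `u` with length at most `‖u‖ / 2`. Hence the projection of `w` to
that line has length at least `(|p| - |q| / 2) ‖u‖`, which handles large `|p|` when `|q|` is small.
For large `|q|` one compares areas: `u` and `w` span a parallelogram of area `|q| A`, where `A` is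
the area spanned by `u` and `v`, so `‖w‖ ≥ |q| A / ‖u‖`; and `√3 / 2 * ‖u‖² ≤ A`, because the height
of `v` over `u` is at least `√3 / 2 * ‖u‖`. Eliminating `‖u‖` gives `√3 / 2 * q² A ≤ ‖w‖²`.
Squared areas are Gram determinants.
-/

open Matrix
open scoped RealInnerProductSpace ComplexConjugate

section InnerProductSpace

variable {E : Type*} [NormedAddCommGroup E] [InnerProductSpace ℝ E] {u v : E}

theorem det_gram_pair (u v : E) :
    (gram ℝ ![u, v]).det = ‖u‖ ^ 2 * ‖v‖ ^ 2 - ⟪u, v⟫ ^ 2 := by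
  simp only [det_fin_two, gram_apply, cons_val_zero, cons_val_one, real_inner_self_eq_norm_sq,
    real_inner_comm u v, sq ⟪u, v⟫]

theorem det_gram_pair_le (u v : E) : (gram ℝ ![u, v]).det ≤ ‖u‖ ^ 2 * ‖v‖ ^ 2 := by
  rw [det_gram_pair]
  exact sub_le_self _ (sq_nonneg _)

theorem inner_smul_add_smul_right (u v : E) (p q : ℝ) :
    ⟪u, p • u + q • v⟫ = p * ‖u‖ ^ 2 + q * ⟪u, v⟫ := by
  rw [inner_add_right, real_inner_smul_right, real_inner_smul_right, real_inner_self_eq_norm_sq]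

theorem det_gram_pair_smul_add_smul (u v : E) (p q : ℝ) :
    (gram ℝ ![u, p • u + q • v]).det = q ^ 2 * (gram ℝ ![u, v]).det := by
  have norm_sq : ‖p • u + q • v‖ ^ 2 = p ^ 2 * ‖u‖ ^ 2 + 2 * p * q * ⟪u, v⟫ + q ^ 2 * ‖v‖ ^ 2 := by
    rw [norm_add_sq_real, norm_smul, norm_smul, real_inner_smul_left, real_inner_smul_right,
      mul_pow, mul_pow, Real.norm_eq_abs, Real.norm_eq_abs, sq_abs, sq_abs]
    ring
  rw [det_gram_pair, det_gram_pair, inner_smul_add_smul_right, norm_sq]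
  ring

theorem abs_inner_le_half_norm_sq_of_norm_le (h_add : ‖v‖ ≤ ‖u + v‖) (h_sub : ‖v‖ ≤ ‖u - v‖) :
    |⟪u, v⟫| ≤ ‖u‖ ^ 2 / 2 := by
  have h_add_sq := pow_le_pow_left₀ (norm_nonneg v) h_add 2
  have h_sub_sq := pow_le_pow_left₀ (norm_nonneg v) h_sub 2
  rw [norm_add_sq_real] at h_add_sq
  rw [norm_sub_sq_real] at h_sub_sq
  exact abs_le.mpr ⟨by linarith, by linarith⟩

theorem abs_sub_half_abs_mul_norm_le (h : |⟪u, v⟫| ≤ ‖u‖ ^ 2 / 2) (p q : ℝ) :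
    (|p| - |q| / 2) * ‖u‖ ≤ ‖p • u + q • v‖ := by
  rcases (norm_nonneg u).eq_or_lt with hu | hu
  · rw [← hu, mul_zero]
    exact norm_nonneg _
  refine le_of_mul_le_mul_left ?_ hu
  calc ‖u‖ * ((|p| - |q| / 2) * ‖u‖)
      = |p| * ‖u‖ ^ 2 - |q| * (‖u‖ ^ 2 / 2) := by ring
    _ ≤ |p| * ‖u‖ ^ 2 - |q| * |⟪u, v⟫| := by gcongr
    _ = |p * ‖u‖ ^ 2| - |q * ⟪u, v⟫| := by rw [abs_mul, abs_mul, abs_of_nonneg (sq_nonneg ‖u‖)]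
    _ ≤ |p * ‖u‖ ^ 2 + q * ⟪u, v⟫| := abs_sub_abs_le_abs_add _ _
    _ = |⟪u, p • u + q • v⟫| := by rw [inner_smul_add_smul_right]
    _ ≤ ‖u‖ * ‖p • u + q • v‖ := abs_real_inner_le_norm _ _

/-- The pair `(u, v)` is reduced in the sense of Lagrange and Gauss: `u` is no longer than `v`, and
`v` cannot be shortened by adding or subtracting `u`. For linearly independent vectors this says
that `u` and `v` are a shortest and a second shortest vector of the lattice they span. -/
structure IsLagrangeReduced (u v : E) : Prop where
  norm_le : ‖u‖ ≤ ‖v‖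
  norm_le_add : ‖v‖ ≤ ‖u + v‖
  norm_le_sub : ‖v‖ ≤ ‖u - v‖

namespace IsLagrangeReduced

theorem abs_inner_le_half_norm_sq (h : IsLagrangeReduced u v) :
    |⟪u, v⟫| ≤ ‖u‖ ^ 2 / 2 :=
  abs_inner_le_half_norm_sq_of_norm_le h.norm_le_add h.norm_le_sub

theorem three_mul_norm_pow_four_le_det_gram (h : IsLagrangeReduced u v) :
    3 * ‖u‖ ^ 4 ≤ 4 * (gram ℝ ![u, v]).det := by
  obtain ⟨neg_le_inner, inner_le⟩ := abs_le.mp h.abs_inner_le_half_norm_sq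
  have inner_sq_le : ⟪u, v⟫ ^ 2 ≤ (‖u‖ ^ 2 / 2) ^ 2 := sq_le_sq' neg_le_inner inner_le
  have norm_sq_mul_le : ‖u‖ ^ 2 * ‖u‖ ^ 2 ≤ ‖u‖ ^ 2 * ‖v‖ ^ 2 := by
    gcongr
    exact h.norm_le
  rw [det_gram_pair]
  linarith

-- With `A² = det`, this is the square of `√3 / 2 * q² A ≤ ‖p u + q v‖²`.
theorem three_mul_pow_four_mul_det_gram_le (h : IsLagrangeReduced u v) (p q : ℝ) :
    3 * q ^ 4 * (gram ℝ ![u, v]).det ≤ 4 * ‖p • u + q • v‖ ^ 4 := by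
  have det_nonneg : 0 ≤ (gram ℝ ![u, v]).det := (posSemidef_gram ℝ ![u, v]).det_nonneg
  have sq_mul_det_le : q ^ 2 * (gram ℝ ![u, v]).det ≤ ‖u‖ ^ 2 * ‖p • u + q • v‖ ^ 2 :=
    det_gram_pair_smul_add_smul u v p q ▸ det_gram_pair_le u (p • u + q • v)
  have norm_pow_four_le := h.three_mul_norm_pow_four_le_det_gram
  generalize (gram ℝ ![u, v]).det = d at *
  rcases det_nonneg.eq_or_lt with rfl | hd
  · rw [mul_zero]
    positivity
  refine le_of_mul_le_mul_left ?_ hd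
  calc d * (3 * q ^ 4 * d)
      = 3 * (q ^ 2 * d) ^ 2 := by ring
    _ ≤ 3 * (‖u‖ ^ 2 * ‖p • u + q • v‖ ^ 2) ^ 2 := by gcongr
    _ = 3 * ‖u‖ ^ 4 * ‖p • u + q • v‖ ^ 4 := by ring
    _ ≤ 4 * d * ‖p • u + q • v‖ ^ 4 := by gcongr
    _ = d * (4 * ‖p • u + q • v‖ ^ 4) := by ring

end IsLagrangeReduced

theorem stmt_0_general (h : IsLagrangeReduced u v) {L : ℝ} {P Q : ℕ}
    (hP : L < (P + 1 - Q / 2) * ‖u‖)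
    (hQ : 4 * L ^ 4 < 3 * (Q + 1) ^ 4 * (gram ℝ ![u, v]).det)
    {p q : ℤ} (hpq : P < |p| ∨ Q < |q|) :
    L < ‖p • u + q • v‖ := by
  rw [← Int.cast_smul_eq_zsmul ℝ p u, ← Int.cast_smul_eq_zsmul ℝ q v]
  rcases lt_or_ge (Q : ℤ) |q| with hq | hq
  · have q_large : (Q + 1 : ℝ) ≤ |(q : ℝ)| := by exact_mod_cast hq
    have det_nonneg : 0 ≤ (gram ℝ ![u, v]).det := (posSemidef_gram ℝ ![u, v]).det_nonneg
    refine lt_of_pow_lt_pow_left₀ 4 (norm_nonneg _) (lt_of_mul_lt_mul_left ?_ zero_le_four)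
    calc 4 * L ^ 4
        < 3 * (Q + 1) ^ 4 * (gram ℝ ![u, v]).det := hQ
      _ ≤ 3 * |(q : ℝ)| ^ 4 * (gram ℝ ![u, v]).det := by gcongr
      _ = 3 * (q : ℝ) ^ 4 * (gram ℝ ![u, v]).det := by rw [(by decide : Even 4).pow_abs]
      _ ≤ 4 * ‖(p : ℝ) • u + (q : ℝ) • v‖ ^ 4 := h.three_mul_pow_four_mul_det_gram_le p q
  · have p_large : (P + 1 : ℝ) ≤ |(p : ℝ)| := by exact_mod_cast hpq.resolve_right hq.not_gt
    have q_small : |(q : ℝ)| ≤ Q := by exact_mod_cast hq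
    calc L < (P + 1 - Q / 2) * ‖u‖ := hP
      _ ≤ (|(p : ℝ)| - |(q : ℝ)| / 2) * ‖u‖ := by gcongr
      _ ≤ ‖(p : ℝ) • u + (q : ℝ) • v‖ :=
        abs_sub_half_abs_mul_norm_le h.abs_inner_le_half_norm_sq p q

end InnerProductSpace

theorem complex_det_gram_pair (z w : ℂ) : (gram ℝ ![z, w]).det = (conj z * w).im ^ 2 := by
  rw [det_gram_pair, Complex.inner, ← Complex.normSq_eq_norm_sq, ← Complex.normSq_eq_norm_sq,
    Complex.normSq_apply, Complex.normSq_apply]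
  simp only [Complex.mul_re, Complex.mul_im, Complex.conj_re, Complex.conj_im]
  ring

theorem stmt_0 (m a b : ℝ) (ℓ : ℂ)
    (hℓ : ℓ = a + b * Complex.I)
    (hm : 1 ≤ m) (hb : 0 < b)
    (hlen : m ≤ ‖ℓ‖)
    (hplus : ‖ℓ‖ ≤ ‖(m : ℂ) + ℓ‖)
    (hminus : ‖ℓ‖ ≤ ‖(m : ℂ) - ℓ‖)
    (harea : 3.35 ≤ b * m) :
    ∀ p q : ℤ, (7 < |p| ∨ 3 < |q|) →
      6 < ‖(p : ℂ) * (m : ℂ) + (q : ℂ) * ℓ‖ := by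
  have norm_m : ‖(m : ℂ)‖ = m := Complex.norm_of_nonneg (zero_le_one.trans hm)
  have reduced : IsLagrangeReduced (m : ℂ) ℓ := ⟨norm_m.trans_le hlen, hplus, hminus⟩
  have det_eq : (gram ℝ ![(m : ℂ), ℓ]).det = (b * m) ^ 2 := by
    rw [complex_det_gram_pair, hℓ]
    simp [mul_comm]
  have det_ge : 3.35 ^ 2 ≤ (gram ℝ ![(m : ℂ), ℓ]).det := by
    rw [det_eq]
    gcongr
  intro p q hpq
  simpa only [zsmul_eq_mul] using stmt_0_general (L := 6) (P := 7) (Q := 3) reduced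
    (by rw [norm_m]; norm_num; linarith) (by norm_num at det_ge ⊢; linarith) hpq
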